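/- Let ρ : ℝ → ℝ be smooth with compact support and with ρ ≡ 1 on a neighborhood of 0, and define ζ : (0,∞) × ℝ → ℂ by ζ(r,θ) = √r · e^{iθ/2} · ρ(r²) (a well-defined function on C_{4π}). Then ∫_0^{4π} ∫_0^∞ (Δζ)(r,θ) · (∂_w ζ)(r,θ) · r dr dθ = −π, where Δζ = ∂_r²ζ + r⁻¹∂_rζ + r⁻²∂_θ²ζ, ∂_wζ = (e^{−iθ}/2)(∂_rζ − (i/r)∂_θζ), and the product of the two factors is taken without complex conjugation (bilinear pairing). Equivalently, for the nonnegative Laplacian Δ_g = −Δ the bilinear pairing ⟨[∂_w, Δ_g]ζ, ζ⟩ = −2⟨Δ_gζ, ∂_wζ⟩ equals −2π. -/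

import Mathlib

open Real Filter Topology MeasureTheory

/-!
On the angular mode `e^{iθ/2}` the substitution `f = φ / √r` removes the first- and zeroth-order
terms of the radial Laplacian: `Δ(f e^{iθ/2}) = φ'' / √r · e^{iθ/2}`, while
`∂_w (f e^{iθ/2}) = φ' / (2√r) · e^{-iθ/2}`. The phases cancel, so the integrand of the pairing is
the exact derivative `(φ' ^ 2)' / 4`, and integrating over `(0, ∞) × [0, 4π]` leaves `-π φ'(0)²`.
For `f = √r ρ(r²)` one has `φ = r ρ(r²)`, hence `φ'(0) = ρ(0)`.
-/

noncomputable section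

/-- The flat Laplacian `∂_r² + r⁻¹ ∂_r + r⁻² ∂_θ²` in polar coordinates. -/
def polarLaplacian (u : ℝ → ℝ → ℂ) (r θ : ℝ) : ℂ :=
  deriv (deriv (fun x : ℝ => u x θ)) r
    + (r : ℂ)⁻¹ * deriv (fun x : ℝ => u x θ) r
    + ((r : ℂ) ^ 2)⁻¹ * deriv (deriv (fun y : ℝ => u r y)) θ

/-- The Wirtinger derivative `∂_w`, `w = r e^{iθ}`, in polar coordinates. -/
def polarWirtinger (u : ℝ → ℝ → ℂ) (r θ : ℝ) : ℂ :=
  Complex.exp (-(Complex.I * (θ : ℂ))) / 2 *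
    (deriv (fun x : ℝ => u x θ) r - Complex.I / (r : ℂ) * deriv (fun y : ℝ => u r y) θ)

/-- The function `f(r) e^{iνθ}` of angular frequency `ν` with radial profile `f`. It is single
valued on the cone of angle `4π` when `2ν` is an integer. -/
def angularMode (ν : ℂ) (f : ℝ → ℂ) (r θ : ℝ) : ℂ :=
  f r * Complex.exp (Complex.I * ν * θ)

section AngularMode

variable (ν : ℂ) (f : ℝ → ℂ)

lemma deriv_angularMode_radius (θ : ℝ) :
    deriv (fun x : ℝ => angularMode ν f x θ) = fun r => angularMode ν (deriv f) r θ :=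
  deriv_mul_const_field' _

lemma deriv_angularMode_angle (r : ℝ) :
    deriv (fun y : ℝ => angularMode ν f r y) =
      fun θ => Complex.I * ν * angularMode ν f r θ := by
  funext θ
  have hphase : HasDerivAt (fun y : ℝ => Complex.I * ν * y) (Complex.I * ν) θ := by
    simpa using (Complex.ofRealCLM.hasDerivAt (x := θ)).const_mul (Complex.I * ν)
  refine ((hphase.cexp.const_mul (f r)).congr_deriv ?_).deriv
  rw [angularMode]
  ring

lemma polarLaplacian_angularMode (r θ : ℝ) :
    polarLaplacian (angularMode ν f) r θ =
      angularMode ν (fun x => deriv (deriv f) x + deriv f x / x - ν ^ 2 / x ^ 2 * f x) r θ := by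
  simp only [polarLaplacian, deriv_angularMode_radius, deriv_angularMode_angle,
    deriv_const_mul_field]
  simp only [angularMode]
  linear_combination
    ν ^ 2 / (r : ℂ) ^ 2 * f r * Complex.exp (Complex.I * ν * θ) * Complex.I_sq

lemma polarWirtinger_angularMode (r θ : ℝ) :
    polarWirtinger (angularMode ν f) r θ =
      angularMode (ν - 1) (fun x => (deriv f x + ν / x * f x) / 2) r θ := by
  have hphase : Complex.exp (Complex.I * (ν - 1) * θ) =
      Complex.exp (-(Complex.I * θ)) * Complex.exp (Complex.I * ν * θ) := by
    rw [← Complex.exp_add]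
    ring_nf
  simp only [polarWirtinger, deriv_angularMode_radius, deriv_angularMode_angle]
  simp only [angularMode, hphase]
  linear_combination
    -(Complex.exp (-(Complex.I * θ)) * Complex.exp (Complex.I * ν * θ)) / 2 * (ν / r * f r)
      * Complex.I_sq

end AngularMode

section DivSqrt

variable {φ : ℝ → ℂ} {r : ℝ}

lemma hasDerivAt_div_sqrt {φ' : ℂ} (hφ : HasDerivAt φ φ' r) (hr : 0 < r) :
    HasDerivAt (fun x : ℝ => φ x / (√x : ℂ)) ((φ' - φ r / (2 * r)) / (√r : ℂ)) r := by
  have hsqrt_ne : (√r : ℂ) ≠ 0 := by exact_mod_cast (Real.sqrt_pos.2 hr).ne'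
  have hsqrt_sq : (√r : ℂ) ^ 2 = r := by exact_mod_cast Real.sq_sqrt hr.le
  refine (hφ.div (Real.hasDerivAt_sqrt hr.ne').ofReal_comp hsqrt_ne).congr_deriv ?_
  rw [← hsqrt_sq]
  push_cast
  field_simp

lemma deriv_div_sqrt (hφ : DifferentiableAt ℝ φ r) (hr : 0 < r) :
    deriv (fun x : ℝ => φ x / (√x : ℂ)) r = (deriv φ r - φ r / (2 * r)) / (√r : ℂ) :=
  (hasDerivAt_div_sqrt hφ.hasDerivAt hr).deriv

lemma deriv_deriv_div_sqrt (hφ : Differentiable ℝ φ) (hφ' : DifferentiableAt ℝ (deriv φ) r)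
    (hr : 0 < r) :
    deriv (deriv (fun x : ℝ => φ x / (√x : ℂ))) r =
      (deriv (deriv φ) r - deriv φ r / r + 3 * φ r / (4 * r ^ 2)) / (√r : ℂ) := by
  have hr_ne : (r : ℂ) ≠ 0 := by exact_mod_cast hr.ne'
  have hderiv : deriv (fun x : ℝ => φ x / (√x : ℂ)) =ᶠ[𝓝 r]
      fun x : ℝ => (deriv φ x - φ x / (2 * x)) / (√x : ℂ) := by
    filter_upwards [lt_mem_nhds hr] with x hx using deriv_div_sqrt (hφ x) hx
  have hden : HasDerivAt (fun x : ℝ => (2 * x : ℂ)) 2 r := by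
    simpa using (Complex.ofRealCLM.hasDerivAt (x := r)).const_mul 2
  have hnum : HasDerivAt (fun x : ℝ => deriv φ x - φ x / (2 * x))
      (deriv (deriv φ) r - (deriv φ r * (2 * r) - φ r * 2) / (2 * r) ^ 2) r :=
    hφ'.hasDerivAt.sub ((hφ r).hasDerivAt.div hden (by simpa using hr_ne))
  rw [hderiv.deriv_eq, (hasDerivAt_div_sqrt hnum hr).deriv]
  field_simp
  ring

lemma polarLaplacian_angularMode_half_div_sqrt (hφ : Differentiable ℝ φ)
    (hφ' : DifferentiableAt ℝ (deriv φ) r) (hr : 0 < r) (θ : ℝ) :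
    polarLaplacian (angularMode (1 / 2) fun x => φ x / (√x : ℂ)) r θ =
      angularMode (1 / 2) (fun x => deriv (deriv φ) x / (√x : ℂ)) r θ := by
  rw [polarLaplacian_angularMode, angularMode, angularMode, deriv_deriv_div_sqrt hφ hφ' hr,
    deriv_div_sqrt (hφ r) hr]
  ring

lemma polarWirtinger_angularMode_half_div_sqrt (hφ : DifferentiableAt ℝ φ r) (hr : 0 < r)
    (θ : ℝ) :
    polarWirtinger (angularMode (1 / 2) fun x => φ x / (√x : ℂ)) r θ =
      angularMode (-(1 / 2)) (fun x => deriv φ x / (2 * (√x : ℂ))) r θ := by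
  rw [polarWirtinger_angularMode, angularMode, angularMode, deriv_div_sqrt hφ hr]
  ring_nf

lemma polarLaplacian_mul_polarWirtinger_half_div_sqrt (hφ : Differentiable ℝ φ)
    (hφ' : DifferentiableAt ℝ (deriv φ) r) (hr : 0 < r) (θ : ℝ) :
    polarLaplacian (angularMode (1 / 2) fun x => φ x / (√x : ℂ)) r θ *
        polarWirtinger (angularMode (1 / 2) fun x => φ x / (√x : ℂ)) r θ * r =
      1 / 4 * deriv (fun x => deriv φ x ^ 2) r := by
  have hsqrt_ne : (√r : ℂ) ≠ 0 := by exact_mod_cast (Real.sqrt_pos.2 hr).ne'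
  have hsqrt_sq : (√r : ℂ) ^ 2 = r := by exact_mod_cast Real.sq_sqrt hr.le
  have hphase : Complex.exp (Complex.I * (1 / 2) * θ) *
      Complex.exp (Complex.I * -(1 / 2) * θ) = 1 := by
    rw [← Complex.exp_add, mul_neg, neg_mul, add_neg_cancel, Complex.exp_zero]
  rw [polarLaplacian_angularMode_half_div_sqrt hφ hφ' hr,
    polarWirtinger_angularMode_half_div_sqrt (hφ r) hr, (hφ'.hasDerivAt.fun_pow 2).deriv]
  calc angularMode (1 / 2) (fun x => deriv (deriv φ) x / (√x : ℂ)) r θ *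
        angularMode (-(1 / 2)) (fun x => deriv φ x / (2 * (√x : ℂ))) r θ * r
      = deriv (deriv φ) r / √r * (deriv φ r / (2 * √r)) * (√r : ℂ) ^ 2 *
          (Complex.exp (Complex.I * (1 / 2) * θ) * Complex.exp (Complex.I * -(1 / 2) * θ)) := by
        rw [angularMode, angularMode, hsqrt_sq]
        ring
    _ = 1 / 4 * ((2 : ℕ) * deriv φ r ^ (2 - 1) * deriv (deriv φ) r) := by
        rw [hphase]
        push_cast
        field_simp
        ring

end DivSqrt

lemma integral_polarLaplacian_mul_polarWirtinger_half_div_sqrt {φ : ℝ → ℂ}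
    (hφ : ContDiff ℝ 2 φ) (hcs : HasCompactSupport φ) :
    ∫ θ in (0 : ℝ)..(4 * π), ∫ r in Set.Ioi (0 : ℝ),
      polarLaplacian (angularMode (1 / 2) fun x => φ x / (√x : ℂ)) r θ *
        polarWirtinger (angularMode (1 / 2) fun x => φ x / (√x : ℂ)) r θ * (r : ℂ) =
      -π * deriv φ 0 ^ 2 := by
  have hφ' : ContDiff ℝ 1 (deriv φ) := hφ.deriv'
  have hcs' : HasCompactSupport fun x => deriv φ x ^ 2 :=
    hcs.deriv.comp_left (g := fun z : ℂ => z ^ 2) (zero_pow two_ne_zero)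
  have hradial (θ : ℝ) : ∫ r in Set.Ioi (0 : ℝ),
      polarLaplacian (angularMode (1 / 2) fun x => φ x / (√x : ℂ)) r θ *
        polarWirtinger (angularMode (1 / 2) fun x => φ x / (√x : ℂ)) r θ * (r : ℂ) =
      1 / 4 * -deriv φ 0 ^ 2 := by
    rw [← hcs'.integral_Ioi_deriv_eq (hφ'.pow 2) 0, ← integral_const_mul]
    exact setIntegral_congr_fun measurableSet_Ioi fun r hr =>
      polarLaplacian_mul_polarWirtinger_half_div_sqrt (hφ.differentiable two_ne_zero)
        (hφ'.differentiable one_ne_zero r) hr θ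
  simp only [hradial, intervalIntegral.integral_const, Complex.real_smul]
  push_cast
  ring

lemma hasCompactSupport_comp_pow {𝕜 E : Type*} [NormedDivisionRing 𝕜] [ProperSpace 𝕜] [Zero E]
    {f : 𝕜 → E} (hf : HasCompactSupport f) {n : ℕ} (hn : n ≠ 0) :
    HasCompactSupport fun x => f (x ^ n) := by
  rw [hasCompactSupport_iff_eventuallyEq, coclosedCompact_eq_cocompact,
    ← Metric.cobounded_eq_cocompact] at hf ⊢
  exact (tendsto_pow_cobounded_cobounded hn).eventually hf

lemma deriv_mul_comp_sq_zero {ρ : ℝ → ℂ} (hρ : DifferentiableAt ℝ ρ 0) :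
    deriv (fun x : ℝ => (x : ℂ) * ρ (x ^ 2)) 0 = ρ 0 := by
  have hcomp : DifferentiableAt ℝ (fun x : ℝ => ρ (x ^ 2)) 0 :=
    DifferentiableAt.comp (0 : ℝ) (by simpa using hρ) (by fun_prop)
  simpa using ((Complex.ofRealCLM.hasDerivAt (x := 0)).fun_mul hcomp.hasDerivAt).deriv

theorem commutator_pairing_cone_4pi_general {ρ : ℝ → ℂ} (hρ : ContDiff ℝ 2 ρ)
    (hcs : HasCompactSupport ρ) {ζ : ℝ → ℝ → ℂ}
    (hζ : ζ = fun r θ : ℝ => (√r : ℂ) * Complex.exp (Complex.I * (θ : ℂ) / 2) * ρ (r ^ 2)) :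
    ∫ θ in (0 : ℝ)..(4 * π), ∫ r in Set.Ioi (0 : ℝ),
      polarLaplacian ζ r θ * polarWirtinger ζ r θ * (r : ℂ) = -π * ρ 0 ^ 2 := by
  have hprofile (r : ℝ) : (r : ℂ) * ρ (r ^ 2) / √r = √r * ρ (r ^ 2) := by
    rw [mul_div_right_comm, ← Complex.ofReal_div, Real.div_sqrt]
  have hmode : ζ = angularMode (1 / 2) fun x => (x : ℂ) * ρ (x ^ 2) / √x := by
    funext r θ
    rw [hζ, angularMode, hprofile]
    ring_nf
  have hφ : ContDiff ℝ 2 fun x : ℝ => (x : ℂ) * ρ (x ^ 2) :=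
    Complex.ofRealCLM.contDiff.mul (hρ.comp (contDiff_id.pow 2))
  rw [hmode, integral_polarLaplacian_mul_polarWirtinger_half_div_sqrt hφ
      (hasCompactSupport_comp_pow hcs two_ne_zero).mul_left,
    deriv_mul_comp_sq_zero (hρ.differentiable two_ne_zero 0)]

end

/-- The commutator pairing on the cone of angle `4π`: for
`ζ(r,θ) = √r e^{iθ/2} ρ(r²)` with `ρ` a smooth compactly supported cutoff equal to `1`
near `0`, one has `∫₀^{4π} ∫₀^∞ (Δζ)(r,θ) (∂_w ζ)(r,θ) r dr dθ = -π`, where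
`Δζ = ∂_r²ζ + r⁻¹∂_rζ + r⁻²∂_θ²ζ`, `∂_wζ = (e^{-iθ}/2)(∂_rζ - (i/r)∂_θζ)`, and the
product is the bilinear (unconjugated) one. -/
theorem commutator_pairing_cone_4pi (ρ : ℝ → ℝ)
    (hρ : ContDiff ℝ (⊤ : ℕ∞) ρ) (hcs : HasCompactSupport ρ)
    (h1 : ∀ᶠ x in 𝓝 (0:ℝ), ρ x = 1)
    (ζ : ℝ → ℝ → ℂ)
    (hζ : ζ = fun r θ : ℝ =>
      (Real.sqrt r : ℂ) * Complex.exp (Complex.I * (θ : ℂ) / 2) * ((ρ (r ^ 2) : ℝ) : ℂ)) :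
    ∫ θ in (0:ℝ)..(4 * π), ∫ r in Set.Ioi (0:ℝ),
      (deriv (deriv (fun x : ℝ => ζ x θ)) r
        + (r : ℂ)⁻¹ * deriv (fun x : ℝ => ζ x θ) r
        + ((r : ℂ) ^ 2)⁻¹ * deriv (deriv (fun y : ℝ => ζ r y)) θ) *
      ((Complex.exp (-(Complex.I * (θ : ℂ))) / 2) *
        (deriv (fun x : ℝ => ζ x θ) r
          - (Complex.I / (r : ℂ)) * deriv (fun y : ℝ => ζ r y) θ)) *
      (r : ℂ) = -(π : ℂ) := by
  have hρ₂ : ContDiff ℝ 2 fun x => (ρ x : ℂ) :=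
    Complex.ofRealCLM.contDiff.comp (contDiff_infty.1 hρ 2)
  exact (commutator_pairing_cone_4pi_general hρ₂ (hcs.comp_left Complex.ofReal_zero) hζ).trans
    (by simp [h1.self_of_nhds])
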